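/- Let ℏ > 0 and let ψ : ℝ → ℂ be smooth with compact support, and let w(x,p) = (1/(2π)) ∫_ℝ conj(ψ(x + βℏ/2)) ψ(x − βℏ/2) e^{iβp} dβ be Wigner's density. Then w is integrable on ℝ², and for all real α, β (not both zero), its two-dimensional Fourier transform satisfies (1/(2π)) ∫∫_{ℝ²} w(x,p) e^{−i(αx+βp)} dx dp = (e^{iαβℏ/2}/(2π)) ∫_ℝ conj(ψ(y)) e^{−iαy} ψ(y − βℏ) dy. -/

import Mathlib

open MeasureTheory Real

theorem HasCompactSupport.prodMk_right {E : Type*} [Zero E] {F : ℝ × ℝ → E}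
    (hF : HasCompactSupport F) (x : ℝ) : HasCompactSupport fun b => F (x, b) := by
  refine HasCompactSupport.intro (hF.isCompact.image continuous_snd) fun b hb => ?_
  by_contra h
  exact hb ⟨(x, b), subset_tsupport F h, rfl⟩

theorem HasCompactSupport.integrable_mul_exp {f : ℝ → ℂ} (hf : Continuous f)
    (hs : HasCompactSupport f) (p : ℝ) :
    Integrable fun b : ℝ => f b * Complex.exp (Complex.I * b * p) :=
  (by fun_prop : Continuous fun b : ℝ => f b * Complex.exp (Complex.I * b * p))
    |>.integrable_of_hasCompactSupport hs.mul_right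

theorem integral_deriv_mul_exp {f : ℝ → ℂ} (hf : ContDiff ℝ 1 f) (hs : HasCompactSupport f)
    (p : ℝ) :
    ∫ b : ℝ, deriv f b * Complex.exp (Complex.I * b * p) =
      -(Complex.I * p) * ∫ b : ℝ, f b * Complex.exp (Complex.I * b * p) := by
  have hexp (b : ℝ) : HasDerivAt (fun b : ℝ => Complex.exp (Complex.I * b * p))
      (Complex.exp (Complex.I * b * p) * (Complex.I * p)) b := by
    have h := (((hasDerivAt_id b).ofReal_comp.const_mul Complex.I).mul_const (p : ℂ)).cexp
    simpa using h
  have hint := hs.integrable_mul_exp hf.continuous p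
  have h := integral_mul_deriv_eq_deriv_mul_of_integrable
    (fun x _ => (hf.differentiable (by norm_num) x).hasDerivAt) (fun x _ => hexp x)
    (by simpa [Pi.mul_def, mul_assoc] using hint.mul_const (Complex.I * p))
    (hs.deriv.integrable_mul_exp (hf.continuous_deriv le_rfl) p) hint
  simp_rw [← mul_assoc _ _ (Complex.I * p)] at h
  rw [integral_mul_const] at h
  linear_combination h

theorem norm_integral_mul_exp_le {f : ℝ → ℂ} (hf : ContDiff ℝ 2 f) (hs : HasCompactSupport f)
    (p : ℝ) :
    ‖∫ b : ℝ, f b * Complex.exp (Complex.I * b * p)‖ ≤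
      (∫ b : ℝ, ‖f b - deriv (deriv f) b‖) * (1 + p ^ 2)⁻¹ := by
  have hf' : ContDiff ℝ 1 (deriv f) := by
    apply ContDiff.deriv'
    simpa using! hf
  have h : ((1 + p ^ 2 : ℝ) : ℂ) * ∫ b : ℝ, f b * Complex.exp (Complex.I * b * p) =
      ∫ b : ℝ, (f b - deriv (deriv f) b) * Complex.exp (Complex.I * b * p) := by
    simp_rw [sub_mul]
    rw [integral_sub (hs.integrable_mul_exp hf.continuous p)
      (hs.deriv.deriv.integrable_mul_exp (hf'.continuous_deriv le_rfl) p),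
      integral_deriv_mul_exp hf' hs.deriv, integral_deriv_mul_exp (hf.of_le (by norm_num)) hs]
    push_cast
    linear_combination
      ((p : ℂ) ^ 2 * ∫ b : ℝ, f b * Complex.exp (Complex.I * b * p)) * Complex.I_sq
  have hp : 0 < 1 + p ^ 2 := by positivity
  rw [← div_eq_mul_inv, le_div_iff₀ hp]
  calc _ = ‖((1 + p ^ 2 : ℝ) : ℂ) * ∫ b : ℝ, f b * Complex.exp (Complex.I * b * p)‖ := by
        rw [norm_mul, Complex.norm_real, norm_of_nonneg hp.le, mul_comm]
    _ ≤ ∫ b : ℝ, ‖(f b - deriv (deriv f) b) * Complex.exp (Complex.I * b * p)‖ := by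
        rw [h]; exact norm_integral_le_integral_norm _
    _ = _ := by
        congr 1 with b
        rw [norm_mul, show Complex.I * b * p = ((b * p : ℝ) : ℂ) * Complex.I by push_cast; ring,
          Complex.norm_exp_ofReal_mul_I, mul_one]

theorem integrable_integral_mul_exp {f : ℝ → ℂ} (hf : ContDiff ℝ 2 f)
    (hs : HasCompactSupport f) :
    Integrable fun p : ℝ => ∫ b : ℝ, f b * Complex.exp (Complex.I * b * p) := by
  have hc := hf.continuous
  refine (integrable_inv_one_add_sq.const_mul (∫ b : ℝ, ‖f b - deriv (deriv f) b‖)).mono'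
    (StronglyMeasurable.integral_prod_right (Continuous.stronglyMeasurable ?_)).aestronglyMeasurable
    (.of_forall (norm_integral_mul_exp_le hf hs))
  unfold Function.uncurry
  fun_prop

theorem integrable_partial_integral_mul_exp {F : ℝ × ℝ → ℂ} (hF : ContDiff ℝ 2 F)
    (hs : HasCompactSupport F) :
    Integrable fun q : ℝ × ℝ => ∫ b : ℝ, F (q.1, b) * Complex.exp (Complex.I * b * q.2) := by
  have hslice (x : ℝ) : ContDiff ℝ 2 fun b => F (x, b) := by fun_prop
  have hderiv {G : ℝ × ℝ → ℂ} (hG : ContDiff ℝ 1 G) (x b : ℝ) :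
      deriv (fun b => G (x, b)) b = fderiv ℝ G (x, b) (0, 1) :=
    ((hG.differentiable (by norm_num) (x, b)).hasFDerivAt.comp_hasDerivAt b
      ((hasDerivAt_const b x).prodMk (hasDerivAt_id b))).deriv
  have hF' : ContDiff ℝ 1 fun q => fderiv ℝ F q (0, 1) :=
    (hF.fderiv_right (m := 1) (by norm_num)).clm_apply contDiff_const
  have hF'' : Continuous fun q => fderiv ℝ (fun q => fderiv ℝ F q (0, 1)) q (0, 1) :=
    (hF'.continuous_fderiv (by norm_num)).clm_apply continuous_const
  have hs'' := (hs.fderiv_apply ℝ (0, 1)).fderiv_apply ℝ (0, 1)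
  have hint : Integrable fun x : ℝ =>
      ∫ b : ℝ, ‖F (x, b) - deriv (deriv fun b => F (x, b)) b‖ := by
    have h := ((hF.continuous.integrable_of_hasCompactSupport (μ := volume.prod volume) hs).sub
      (hF''.integrable_of_hasCompactSupport hs'')).norm.integral_prod_left
    refine h.congr (.of_forall fun x => integral_congr_ae (.of_forall fun b => ?_))
    simp only [Pi.sub_apply, funext (hderiv (hF.of_le (by norm_num)) x), hderiv hF']
  have hc := hF.continuous
  refine (hint.mul_prod integrable_inv_one_add_sq).mono'
    (StronglyMeasurable.integral_prod_right (Continuous.stronglyMeasurable ?_)).aestronglyMeasurable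
    (.of_forall fun q => norm_integral_mul_exp_le (hslice q.1) (hs.prodMk_right q.1) q.2)
  unfold Function.uncurry
  fun_prop

open FourierTransform in
theorem integral_integral_mul_exp_mul_exp {f : ℝ → ℂ} (hf : ContDiff ℝ 2 f)
    (hs : HasCompactSupport f) (β : ℝ) :
    ∫ p : ℝ, (∫ b : ℝ, f b * Complex.exp (Complex.I * b * p)) *
      Complex.exp (-(Complex.I * (β * p))) = 2 * π * f β := by
  have hinv (p : ℝ) : ∫ b : ℝ, f b * Complex.exp (Complex.I * b * p) = 𝓕⁻ f (p / (2 * π)) := by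
    rw [Real.fourierInv_eq']
    congr 1 with b
    rw [smul_eq_mul, mul_comm]
    congr 2
    simp
    field_simp
  have hfourier : Integrable (𝓕 f) := by
    have h := (integrable_integral_mul_exp hf hs).comp_mul_left'
      (R := -(2 * π)) (by simp [pi_ne_zero])
    refine h.congr (.of_forall fun ξ => ?_)
    simp only [hinv, Real.fourierInv_eq_fourier_neg]
    field_simp
  have hfi := congrFun (hf.continuous.fourier_fourierInv_eq
    (hf.continuous.integrable_of_hasCompactSupport hs) hfourier) β
  have hscale := Measure.integral_comp_div
    (fun ξ : ℝ => 𝓕⁻ f ξ * Complex.exp (-(Complex.I * (β * (2 * π * ξ))))) (2 * π)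
  calc _ = ∫ p : ℝ, 𝓕⁻ f (p / (2 * π)) *
        Complex.exp (-(Complex.I * (β * (2 * π * ((p / (2 * π) : ℝ) : ℂ))))) := by
        congr 1 with p
        rw [hinv]
        congr 2
        push_cast
        field_simp
    _ = _ := by
        rw [hscale, abs_of_pos two_pi_pos, Complex.real_smul]
        push_cast
        congr 1
        rw [← hfi, Real.fourier_eq']
        congr 1 with ξ
        rw [smul_eq_mul, mul_comm]
        congr 2
        simp
        ring

theorem contDiff_wignerKernel {ψ : ℝ → ℂ} {n : WithTop ℕ∞} (hψ : ContDiff ℝ n ψ) (ℏ : ℝ) :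
    ContDiff ℝ n fun q : ℝ × ℝ =>
      (starRingEnd ℂ) (ψ (q.1 + q.2 * ℏ / 2)) * ψ (q.1 - q.2 * ℏ / 2) := by
  have h : ContDiff ℝ n fun x => (starRingEnd ℂ) (ψ x) := Complex.conjCLE.contDiff.comp hψ
  exact (h.comp (by fun_prop : ContDiff ℝ n fun q : ℝ × ℝ => q.1 + q.2 * ℏ / 2)).mul
    (hψ.comp (by fun_prop))

theorem hasCompactSupport_wignerKernel {ψ : ℝ → ℂ} (hs : HasCompactSupport ψ) {ℏ : ℝ}
    (hℏ : ℏ ≠ 0) :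
    HasCompactSupport fun q : ℝ × ℝ =>
      (starRingEnd ℂ) (ψ (q.1 + q.2 * ℏ / 2)) * ψ (q.1 - q.2 * ℏ / 2) := by
  refine HasCompactSupport.intro ((hs.isCompact.prod hs.isCompact).image
    (by fun_prop : Continuous fun u : ℝ × ℝ => ((u.1 + u.2) / 2, (u.1 - u.2) / ℏ))) fun q hq => ?_
  by_contra h
  rw [mul_eq_zero, not_or, map_eq_zero] at h
  refine hq ⟨(q.1 + q.2 * ℏ / 2, q.1 - q.2 * ℏ / 2),
    ⟨subset_tsupport ψ h.1, subset_tsupport ψ h.2⟩, ?_⟩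
  ext
  · simp
  · simp
    field_simp

/-- The two-dimensional Fourier transform of Wigner's density:
ŵ(α,β) = (e^{iαβℏ/2}/(2π)) ∫ conj(ψ(y)) e^{−iαy} ψ(y−βℏ) dy. -/
theorem wigner_fourier_transform (ℏ : ℝ) (hℏ : 0 < ℏ) (ψ : ℝ → ℂ)
    (hsmooth : ContDiff ℝ (⊤ : ℕ∞) ψ) (hsupp : HasCompactSupport ψ)
    (w : ℝ → ℝ → ℂ)
    (hw : ∀ x p : ℝ, w x p = (1 / (2 * (π : ℂ))) *
      ∫ β : ℝ, (starRingEnd ℂ) (ψ (x + β * ℏ / 2)) * ψ (x - β * ℏ / 2) *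
        Complex.exp (Complex.I * β * p)) :
    Integrable (fun q : ℝ × ℝ => w q.1 q.2) ∧
    ∀ α β : ℝ, (α ≠ 0 ∨ β ≠ 0) →
      (1 / (2 * (π : ℂ))) *
          ∫ q : ℝ × ℝ, w q.1 q.2 * Complex.exp (-(Complex.I * (α * q.1 + β * q.2))) =
      (Complex.exp (Complex.I * α * β * ℏ / 2) / (2 * (π : ℂ))) *
          ∫ y : ℝ, (starRingEnd ℂ) (ψ y) * Complex.exp (-(Complex.I * α * y)) *
            ψ (y - β * ℏ) := by
  set G : ℝ × ℝ → ℂ := fun q =>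
    (starRingEnd ℂ) (ψ (q.1 + q.2 * ℏ / 2)) * ψ (q.1 - q.2 * ℏ / 2) with hG
  have hGs : HasCompactSupport G := hasCompactSupport_wignerKernel hsupp hℏ.ne'
  have hGc : ContDiff ℝ 2 G :=
    contDiff_wignerKernel (hsmooth.of_le (WithTop.coe_le_coe.2 (le_top : (2 : ℕ∞) ≤ ⊤))) ℏ
  have hwint : Integrable fun q : ℝ × ℝ => w q.1 q.2 := by
    simp_rw [hw]
    exact (integrable_partial_integral_mul_exp hGc hGs).const_mul _
  refine ⟨hwint, fun α β _ => ?_⟩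
  have hint : Integrable fun q : ℝ × ℝ =>
      w q.1 q.2 * Complex.exp (-(Complex.I * (α * q.1 + β * q.2))) := by
    refine hwint.mul_bdd (c := 1) (by fun_prop) (.of_forall fun q => ?_)
    rw [show -(Complex.I * (α * q.1 + β * q.2)) =
      ((-(α * q.1 + β * q.2) : ℝ) : ℂ) * Complex.I by push_cast; ring,
      Complex.norm_exp_ofReal_mul_I]
  have hinner (x : ℝ) : ∫ p : ℝ, w x p * Complex.exp (-(Complex.I * (α * x + β * p))) =
      G (x, β) * Complex.exp (-(Complex.I * α * x)) := by
    have h := integral_integral_mul_exp_mul_exp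
      (by fun_prop : ContDiff ℝ 2 fun b => G (x, b)) (hGs.prodMk_right x) β
    calc _ = ∫ p : ℝ, (1 / (2 * (π : ℂ)) * Complex.exp (-(Complex.I * α * x))) *
          ((∫ b : ℝ, G (x, b) * Complex.exp (Complex.I * b * p)) *
            Complex.exp (-(Complex.I * (β * p)))) := by
          congr 1 with p
          rw [hw, mul_add, neg_add, Complex.exp_add, ← mul_assoc Complex.I (α : ℂ)]
          ring
      _ = _ := by
          rw [integral_const_mul, h]
          field_simp
  have hshift : ∫ x : ℝ, G (x, β) * Complex.exp (-(Complex.I * α * x)) =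
      Complex.exp (Complex.I * α * β * ℏ / 2) *
        ∫ y : ℝ, (starRingEnd ℂ) (ψ y) * Complex.exp (-(Complex.I * α * y)) *
          ψ (y - β * ℏ) := by
    rw [← integral_add_right_eq_self (fun y : ℝ => (starRingEnd ℂ) (ψ y) *
      Complex.exp (-(Complex.I * α * y)) * ψ (y - β * ℏ)) (β * ℏ / 2), ← integral_const_mul]
    congr 1 with x
    have hexp : Complex.exp (-(Complex.I * α * x)) = Complex.exp (Complex.I * α * β * ℏ / 2) *
        Complex.exp (-(Complex.I * α * ((x + β * ℏ / 2 : ℝ) : ℂ))) := by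
      rw [← Complex.exp_add]
      congr 1
      push_cast
      ring
    rw [hexp, hG, show x + β * ℏ / 2 - β * ℏ = x - β * ℏ / 2 by ring]
    ring
  rw [Measure.volume_eq_prod, integral_prod _ hint]
  simp_rw [hinner]
  rw [hshift]
  ring
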